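/- The infinite series identity 315π/(16√2) = Σ_{k=0}^{∞} (-1/27)^k · [(1/8)_k (1/4)_k (5/8)_k (1)_k] / [(13/12)_k (11/8)_k (17/12)_k (15/8)_k] · (448k³ + 688k² + 305k + 44) holds, where the sum is over natural numbers k and all quantities are real numbers. -/

import Mathlib

noncomputable def risingFactorial (a : ℝ) (k : ℕ) : ℝ := ∏ i ∈ Finset.range k, (a + i)

open Filter Topology in
theorem leib_aux : Tendsto (fun J : ℕ => ∑ j ∈ Finset.range J,
    (-1 : ℝ) ^ j * (1 / (4 * (j:ℝ) + 1) + 1 / (4 * (j:ℝ) + 3))) atTop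
    (𝓝 (Real.pi / (2 * Real.sqrt 2))) := by
  have h2 : Real.sqrt 2 ^ 2 = 2 := Real.sq_sqrt (by norm_num)
  have hs : 0 < Real.sqrt 2 := by positivity
  have hs1 : 1 < Real.sqrt 2 := by nlinarith
  have hpos : ∀ x : ℝ, 0 < 1 + x ^ 4 := fun x => by positivity
  have hI : ∫ x in (0:ℝ)..1, (1 + x ^ 2) / (1 + x ^ 4) = Real.pi / (2 * Real.sqrt 2) := by
    have hd : ∀ x ∈ Set.uIcc (0:ℝ) 1, HasDerivAt (fun x : ℝ => (1 / Real.sqrt 2) *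
        (Real.arctan (Real.sqrt 2 * x + 1) + Real.arctan (Real.sqrt 2 * x - 1)))
        ((1 + x ^ 2) / (1 + x ^ 4)) x := by
      intro x _
      have e1 : HasDerivAt (fun x : ℝ => Real.sqrt 2 * x + 1) (Real.sqrt 2) x := by
        simpa using ((hasDerivAt_id x).const_mul (Real.sqrt 2)).add_const 1
      have e2 : HasDerivAt (fun x : ℝ => Real.sqrt 2 * x - 1) (Real.sqrt 2) x := by
        simpa using ((hasDerivAt_id x).const_mul (Real.sqrt 2)).sub_const 1
      have e3 := (e1.arctan.add e2.arctan).const_mul (1 / Real.sqrt 2)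
      refine e3.congr_deriv ?_
      have p1 : 0 < 1 + (Real.sqrt 2 * x + 1) ^ 2 := by positivity
      have p2 : 0 < 1 + (Real.sqrt 2 * x - 1) ^ 2 := by positivity
      have p3 := hpos x
      have key : (1 + (Real.sqrt 2 * x + 1) ^ 2) * (1 + (Real.sqrt 2 * x - 1) ^ 2)
          = 4 * (1 + x ^ 4) := by
        have h4 : Real.sqrt 2 ^ 4 = 4 := by
          rw [show (4:ℕ) = 2 * 2 from rfl, pow_mul, h2]; norm_num
        linear_combination (x^4) * h4
      have key2 : (1 + (Real.sqrt 2 * x + 1) ^ 2) + (1 + (Real.sqrt 2 * x - 1) ^ 2)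
          = 4 * (1 + x ^ 2) := by
        linear_combination (2 * x^2) * h2
      have : 1 / Real.sqrt 2 * (1 / (1 + (Real.sqrt 2 * x + 1) ^ 2) * Real.sqrt 2 +
          1 / (1 + (Real.sqrt 2 * x - 1) ^ 2) * Real.sqrt 2)
          = ((1 + (Real.sqrt 2 * x + 1) ^ 2) + (1 + (Real.sqrt 2 * x - 1) ^ 2)) /
          ((1 + (Real.sqrt 2 * x + 1) ^ 2) * (1 + (Real.sqrt 2 * x - 1) ^ 2)) := by
        rw [eq_div_iff (by positivity)]
        field_simp
        ring
      rw [this, key, key2]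
      field_simp
    rw [intervalIntegral.integral_eq_sub_of_hasDerivAt hd]
    · have hinv : Real.sqrt 2 - 1 = (Real.sqrt 2 + 1)⁻¹ := by
        apply eq_inv_of_mul_eq_one_left
        linear_combination h2
      have := Real.arctan_inv_of_pos (show 0 < Real.sqrt 2 + 1 by positivity)
      simp only [mul_one, mul_zero, zero_add, zero_sub]
      rw [hinv, this, Real.arctan_neg]
      field_simp
      ring
    · apply Continuous.intervalIntegrable
      exact Continuous.div (by fun_prop) (by fun_prop) (fun x => (hpos x).ne')
  have hS : ∀ J : ℕ, ∑ j ∈ Finset.range J,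
      (-1 : ℝ) ^ j * (1 / (4 * (j:ℝ) + 1) + 1 / (4 * (j:ℝ) + 3))
      = ∫ x in (0:ℝ)..1, ∑ j ∈ Finset.range J, (-1:ℝ) ^ j * (x ^ (4 * j) + x ^ (4 * j + 2)) := by
    intro J
    rw [intervalIntegral.integral_finsetSum]
    · refine Finset.sum_congr rfl fun j _ => ?_
      rw [intervalIntegral.integral_const_mul, intervalIntegral.integral_add, integral_pow,
        integral_pow]
      · push_cast
        simp
        ring
      · exact (by fun_prop : Continuous _).intervalIntegrable _ _
      · exact (by fun_prop : Continuous _).intervalIntegrable _ _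
    · intro j _
      exact (by fun_prop : Continuous _).intervalIntegrable _ _
  have hfin : ∀ (J : ℕ) (x : ℝ), ∑ j ∈ Finset.range J, (-1:ℝ) ^ j * (x ^ (4 * j) + x ^ (4 * j + 2))
      = (1 + x ^ 2) / (1 + x ^ 4) - (1 + x ^ 2) / (1 + x ^ 4) * ((-1) ^ J * x ^ (4 * J)) := by
    intro J x
    have := hpos x
    induction J with
    | zero => simp
    | succ J ih =>
      rw [Finset.sum_range_succ, ih]
      field_simp
      ring
  have hc : Continuous (fun x : ℝ => (1 + x ^ 2) / (1 + x ^ 4)) :=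
    Continuous.div (by fun_prop) (by fun_prop) (fun x => (hpos x).ne')
  have hb : ∀ J : ℕ, |∑ j ∈ Finset.range J,
      (-1 : ℝ) ^ j * (1 / (4 * (j:ℝ) + 1) + 1 / (4 * (j:ℝ) + 3)) - Real.pi / (2 * Real.sqrt 2)|
      ≤ 2 * (1 / ((J:ℝ) + 1)) := by
    intro J
    rw [hS, ← hI, ← intervalIntegral.integral_sub]
    · have h1 : |∫ x in (0:ℝ)..1, ((∑ j ∈ Finset.range J, (-1:ℝ) ^ j * (x ^ (4 * j) + x ^ (4 * j + 2)))
          - (1 + x ^ 2) / (1 + x ^ 4))| ≤ ∫ x in (0:ℝ)..1, 2 * x ^ (4 * J) := by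
        rw [← Real.norm_eq_abs]
        apply intervalIntegral.norm_integral_le_of_norm_le (by norm_num)
        · refine Filter.Eventually.of_forall fun x hx => ?_
          rw [hfin, sub_sub_cancel_left, Real.norm_eq_abs, abs_neg, abs_mul, abs_mul, abs_pow,
            abs_neg, abs_one, one_pow, one_mul, abs_of_nonneg (by positivity : (0:ℝ) ≤ (1 + x ^ 2) / (1 + x ^ 4)),
            abs_of_nonneg (pow_nonneg hx.1.le _)]
          apply mul_le_mul_of_nonneg_right _ (pow_nonneg hx.1.le _)
          rw [div_le_iff₀ (hpos x)]
          have := hx.1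
          have := hx.2
          nlinarith [pow_pos hx.1 4]
        · exact (by fun_prop : Continuous _).intervalIntegrable _ _
      refine h1.trans ?_
      rw [intervalIntegral.integral_const_mul, integral_pow]
      simp only [one_pow, ne_eq, Nat.add_eq_zero_iff, one_ne_zero, and_false, not_false_eq_true, zero_pow, sub_zero]
      apply mul_le_mul_of_nonneg_left _ (by norm_num)
      apply one_div_le_one_div_of_le (by positivity)
      push_cast
      have : (0:ℝ) ≤ J := by positivity
      linarith
    · exact (by fun_prop : Continuous _).intervalIntegrable _ _
    · exact hc.intervalIntegrable _ _
  rw [tendsto_iff_norm_sub_tendsto_zero]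
  refine squeeze_zero (fun _ => norm_nonneg _) hb ?_
  simpa using tendsto_one_div_add_atTop_nhds_zero_nat (𝕜 := ℝ) |>.const_mul 2

theorem rf_zero (a : ℝ) : risingFactorial a 0 = 1 := by simp [risingFactorial]

theorem rf_succ (a : ℝ) (k : ℕ) :
    risingFactorial a (k + 1) = risingFactorial a k * (a + k) := by
  simp [risingFactorial, Finset.prod_range_succ]

theorem rf_pos (a : ℝ) (ha : 0 < a) (k : ℕ) : 0 < risingFactorial a k := by
  unfold risingFactorial
  exact Finset.prod_pos fun i _ => by positivity

/-- The hypergeometric kernel of the WZ pair. -/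
noncomputable def TT (n j : ℕ) : ℝ :=
  (-1) ^ (n + j) * (risingFactorial (1/4) (2 * n + j) * risingFactorial (3/4) (n + j) *
    risingFactorial 1 n * risingFactorial (1/4) n) /
    (risingFactorial (7/4) (2 * n + j) * risingFactorial (5/4) (3 * n + j))

theorem TT_j (n j : ℕ) : TT n (j + 1) = - (TT n j * ((1/4 + 2 * n + j) * (3/4 + n + j) /
    ((7/4 + 2 * n + j) * (5/4 + 3 * n + j)))) := by
  unfold TT
  rw [← add_assoc, ← add_assoc, ← add_assoc, rf_succ, rf_succ, rf_succ, rf_succ]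
  have := (rf_pos (7/4) (by norm_num) (2 * n + j)).ne'
  have := (rf_pos (5/4) (by norm_num) (3 * n + j)).ne'
  push_cast
  have h1 : (7/4 + (2 * (n:ℝ) + j)) ≠ 0 := by positivity
  have h2 : (5/4 + (3 * (n:ℝ) + j)) ≠ 0 := by positivity
  rw [add_assoc (7/4 : ℝ), add_assoc (5/4 : ℝ), pow_succ]
  field_simp
  ring

theorem TT_n (n j : ℕ) : TT (n + 1) j = - (TT n j *
    ((1/4 + 2 * n + j) * (5/4 + 2 * n + j) * (3/4 + n + j) * (1 + n) * (1/4 + n) /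
    ((7/4 + 2 * n + j) * (11/4 + 2 * n + j) * ((5/4 + 3 * n + j) * (9/4 + 3 * n + j)
      * (13/4 + 3 * n + j))))) := by
  unfold TT
  rw [show 2 * (n + 1) + j = 2 * n + j + 1 + 1 by ring, show n + 1 + j = n + j + 1 by ring,
    show 3 * (n + 1) + j = 3 * n + j + 1 + 1 + 1 by ring]
  simp only [rf_succ]
  have := (rf_pos (7/4) (by norm_num) (2 * n + j)).ne'
  have := (rf_pos (5/4) (by norm_num) (3 * n + j)).ne'
  push_cast
  have e1 : (7/4 + (2 * (n:ℝ) + j)) = 7/4 + 2 * n + j := by ring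
  have e2 : (7/4 + (2 * (n:ℝ) + j + 1)) = 11/4 + 2 * n + j := by ring
  have e3 : (5/4 + (3 * (n:ℝ) + j)) = 5/4 + 3 * n + j := by ring
  have e4 : (5/4 + (3 * (n:ℝ) + j + 1)) = 9/4 + 3 * n + j := by ring
  have e5 : (5/4 + (3 * (n:ℝ) + j + 2)) = 13/4 + 3 * n + j := by ring
  have e6 : (1/4 + (2 * (n:ℝ) + j)) = 1/4 + 2 * n + j := by ring
  have e7 : (1/4 + (2 * (n:ℝ) + j + 1)) = 5/4 + 2 * n + j := by ring
  have e8 : (3/4 + ((n:ℝ) + j)) = 3/4 + n + j := by ring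
  rw [e1, e2, e3, e4, e5, e6, e7, e8]
  have h1 : (7/4 + 2 * (n:ℝ) + j) ≠ 0 := by positivity
  have h2 : (11/4 + 2 * (n:ℝ) + j) ≠ 0 := by positivity
  have h3 : (5/4 + 3 * (n:ℝ) + j) ≠ 0 := by positivity
  have h4 : (9/4 + 3 * (n:ℝ) + j) ≠ 0 := by positivity
  have h5 : (13/4 + 3 * (n:ℝ) + j) ≠ 0 := by positivity
  generalize (7/4 + 2 * (n:ℝ) + j) = d1 at *
  generalize (11/4 + 2 * (n:ℝ) + j) = d2 at *
  generalize (5/4 + 3 * (n:ℝ) + j) = d3 at *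
  generalize (9/4 + 3 * (n:ℝ) + j) = d4 at *
  generalize (13/4 + 3 * (n:ℝ) + j) = d5 at *
  generalize (1/4 + 2 * (n:ℝ) + j) = d6 at *
  generalize (5/4 + 2 * (n:ℝ) + j) = d7 at *
  generalize (3/4 + (n:ℝ) + j) = d8 at *
  rw [pow_succ]
  field_simp

/-- First component of the WZ pair. -/
noncomputable def FF (n j : ℕ) : ℝ := TT n j * (1 + 4 * n + 2 * j)

/-- Numerator polynomial of the certificate. -/
noncomputable def PP (n j : ℝ) : ℝ :=
  33/8 + 879/64 * j + 231/16 * j^2 + 25/4 * j^3 + j^4 + 1091/32 * n + 1263/16 * n * j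
  + 53 * n * j^2 + 11 * n * j^3 + 821/8 * n^2 + 145 * n^2 * j + 46 * n^2 * j^2
  + 128 * n^3 + 84 * n^3 * j + 56 * n^4

/-- Second component of the WZ pair. -/
noncomputable def GG (n j : ℕ) : ℝ := TT n j * (PP n j /
  ((7/4 + 2 * n + j) * (5/4 + 3 * n + j) * (9/4 + 3 * n + j)))

theorem WZ (n j : ℕ) : FF n j - FF (n + 1) j = GG n j - GG n (j + 1) := by
  unfold FF GG
  rw [TT_j, TT_n]
  have h1 : (7/4 + 2 * (n:ℝ) + j) ≠ 0 := by positivity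
  have h2 : (11/4 + 2 * (n:ℝ) + j) ≠ 0 := by positivity
  have h3 : (5/4 + 3 * (n:ℝ) + j) ≠ 0 := by positivity
  have h4 : (9/4 + 3 * (n:ℝ) + j) ≠ 0 := by positivity
  have h5 : (13/4 + 3 * (n:ℝ) + j) ≠ 0 := by positivity
  push_cast
  have e1 : (7/4 + 2 * (n:ℝ) + (j + 1)) = 11/4 + 2 * n + j := by ring
  have e2 : (5/4 + 3 * (n:ℝ) + (j + 1)) = 9/4 + 3 * n + j := by ring
  have e3 : (9/4 + 3 * (n:ℝ) + (j + 1)) = 13/4 + 3 * n + j := by ring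
  rw [e1, e2, e3]
  generalize TT n j = t
  have key : (1 + 4 * (n:ℝ) + 2 * j) * ((7/4 + 2 * n + j) * (11/4 + 2 * n + j) *
      ((5/4 + 3 * n + j) * (9/4 + 3 * n + j) * (13/4 + 3 * n + j)))
      + (1 + 4 * ((n:ℝ) + 1) + 2 * j) * ((1/4 + 2 * n + j) * (5/4 + 2 * n + j) *
        (3/4 + n + j) * (1 + n) * (1/4 + n))
      = PP n j * ((11/4 + 2 * n + j) * (13/4 + 3 * n + j))
        + (1/4 + 2 * n + j) * (3/4 + n + j) * PP n (j + 1) := by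
    unfold PP
    ring
  generalize PP n j = p at *
  generalize PP n (j + 1) = p' at *
  generalize (7/4 + 2 * (n:ℝ) + j) = d1 at *
  generalize (11/4 + 2 * (n:ℝ) + j) = d2 at *
  generalize (5/4 + 3 * (n:ℝ) + j) = d3 at *
  generalize (9/4 + 3 * (n:ℝ) + j) = d4 at *
  generalize (13/4 + 3 * (n:ℝ) + j) = d5 at *
  generalize (1/4 + 2 * (n:ℝ) + j) = d6 at *
  generalize (5/4 + 2 * (n:ℝ) + j) = d7 at *
  generalize (3/4 + (n:ℝ) + j) = d8 at *
  generalize (1 + 4 * (n:ℝ) + 2 * j) = d9 at *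
  generalize (1 + 4 * ((n:ℝ) + 1) + 2 * j) = d10 at *
  generalize (1 + (n:ℝ)) = d11 at *
  generalize (1/4 + (n:ℝ)) = d12 at *
  have l : t * d9 - -(t * (d6 * d7 * d8 * d11 * d12 / (d1 * d2 * (d3 * d4 * d5)))) * d10
      = t * (d9 * (d1 * d2 * (d3 * d4 * d5)) + d10 * (d6 * d7 * d8 * d11 * d12)) /
        (d1 * d2 * (d3 * d4 * d5)) := by
    field_simp
    ring
  rw [l, key]
  field_simp
  ring

theorem WZ_sum (N J : ℕ) : ∑ j ∈ Finset.range J, FF 0 j - ∑ j ∈ Finset.range J, FF N j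
    = ∑ n ∈ Finset.range N, GG n 0 - ∑ n ∈ Finset.range N, GG n J := by
  induction N with
  | zero => simp
  | succ N ih =>
    have : ∑ j ∈ Finset.range J, FF N j - ∑ j ∈ Finset.range J, FF (N + 1) j
        = GG N 0 - GG N J := by
      rw [← Finset.sum_sub_distrib]
      simp only [WZ]
      exact Finset.sum_range_sub' _ _
    rw [Finset.sum_range_succ, Finset.sum_range_succ]
    linarith

theorem TT_zero (j : ℕ) : TT 0 j = (-1) ^ j * (3 / ((4 * j + 1) * (4 * j + 3))) := by
  induction j with
  | zero => simp [TT, rf_zero]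
  | succ j ih =>
    rw [TT_j, ih]
    push_cast
    rw [pow_succ]
    have h1 : (4 * (j:ℝ) + 1) ≠ 0 := by positivity
    have h2 : (4 * (j:ℝ) + 3) ≠ 0 := by positivity
    have h3 : (4 * ((j:ℝ) + 1) + 1) ≠ 0 := by positivity
    have h4 : (4 * ((j:ℝ) + 1) + 3) ≠ 0 := by positivity
    have e : (1/4 + 2 * 0 + (j:ℝ)) * (3/4 + 0 + j) / ((7/4 + 2 * 0 + j) * (5/4 + 3 * 0 + j))
      = (4 * (j:ℝ) + 1) * (4 * j + 3) / ((4 * ((j:ℝ) + 1) + 1) * (4 * ((j:ℝ) + 1) + 3)) := by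
      rw [div_eq_div_iff (by positivity) (by positivity)]
      ring
    rw [e]
    field_simp

theorem FF_zero (j : ℕ) : FF 0 j = 3/4 * ((-1) ^ j * (1 / (4 * (j:ℝ) + 1) + 1 / (4 * (j:ℝ) + 3))) := by
  unfold FF
  rw [TT_zero]
  push_cast
  have h1 : (4 * (j:ℝ) + 1) ≠ 0 := by positivity
  have h2 : (4 * (j:ℝ) + 3) ≠ 0 := by positivity
  field_simp
  ring

theorem FF_zero_abs (j : ℕ) : |FF 0 j| ≤ 3/2 * (1 / ((j:ℝ) + 1)) := by
  rw [FF_zero, abs_mul, abs_mul, abs_pow, abs_neg, abs_one, one_pow, one_mul,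
    abs_of_nonneg (by norm_num), abs_of_nonneg (by positivity)]
  have hj : (0:ℝ) ≤ j := by positivity
  have h1 : 1 / (4 * (j:ℝ) + 1) ≤ 1 / ((j:ℝ) + 1) :=
    one_div_le_one_div_of_le (by positivity) (by linarith)
  have h2 : 1 / (4 * (j:ℝ) + 3) ≤ 1 / ((j:ℝ) + 1) :=
    one_div_le_one_div_of_le (by positivity) (by linarith)
  linarith

theorem FF_succ_abs (n j : ℕ) : |FF (n + 1) j| ≤ |FF n j| * (((1 + n) * (1/4 + n)) /
    ((9/4 + 3 * n + j) * (13/4 + 3 * n + j))) := by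
  unfold FF
  rw [TT_n, neg_mul, abs_neg, mul_assoc (TT n j), abs_mul (TT n j), abs_mul (TT n j),
    mul_assoc |TT n j|]
  apply mul_le_mul_of_nonneg_left _ (abs_nonneg _)
  rw [abs_of_nonneg (by positivity), abs_of_nonneg (by positivity)]
  push_cast
  have hn : (0:ℝ) ≤ n := by positivity
  have hj : (0:ℝ) ≤ j := by positivity
  rw [div_mul_eq_mul_div, mul_div_assoc', div_le_div_iff₀ (by positivity) (by positivity)]
  have a1 : (1 + 4 * ((n:ℝ) + 1) + 2 * j) * (1/4 + 2 * n + j) ≤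
      (1 + 4 * (n:ℝ) + 2 * j) * (11/4 + 2 * n + j) := by nlinarith
  have a2 : (5/4 + 2 * (n:ℝ) + j) ≤ 7/4 + 2 * n + j := by linarith
  have a3 : (3/4 + (n:ℝ) + j) ≤ 5/4 + 3 * n + j := by linarith
  have a4 := mul_le_mul (mul_le_mul a1 a2 (by positivity) (by positivity)) a3
    (by positivity) (by positivity)
  have a5 := mul_le_mul_of_nonneg_right a4 (show (0:ℝ) ≤ (1 + n) * (1/4 + n) *
    ((9/4 + 3 * n + j) * (13/4 + 3 * n + j)) by positivity)
  refine le_trans (le_of_eq ?_) (a5.trans (le_of_eq ?_)) <;> ring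

theorem FF_half (n j : ℕ) : |FF (n + 1) j| ≤ |FF n j| * (1/2) := by
  refine (FF_succ_abs n j).trans (mul_le_mul_of_nonneg_left ?_ (abs_nonneg _))
  have hn : (0:ℝ) ≤ n := by positivity
  have hj : (0:ℝ) ≤ j := by positivity
  rw [div_le_iff₀ (by positivity)]
  nlinarith [mul_nonneg hn hj, mul_nonneg hn hn, mul_nonneg hj hj]

theorem FF_le_zero (n j : ℕ) : |FF n j| ≤ |FF 0 j| := by
  induction n with
  | zero => exact le_rfl
  | succ n ih =>
    have := FF_half n j
    have := abs_nonneg (FF n j)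
    linarith

theorem FF_bound (n j : ℕ) : |FF (n + 1) j| ≤ (1/2) ^ n * (1 / ((j:ℝ) + 1) - 1 / (((j + 1 : ℕ):ℝ) + 1)) := by
  induction n with
  | zero =>
    refine (FF_succ_abs 0 j).trans ?_
    have h := FF_zero_abs j
    have hj : (0:ℝ) ≤ j := by positivity
    have h1 : 1 / ((j:ℝ) + 1) ≤ 1 := by
      rw [div_le_one (by positivity)]; linarith
    have h2 : |FF 0 j| ≤ 3/2 := by linarith
    refine (mul_le_mul_of_nonneg_right h2 (by positivity)).trans ?_
    push_cast
    rw [div_sub_div _ _ (by positivity) (by positivity), pow_zero, one_mul, mul_div_assoc',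
      div_le_div_iff₀ (by positivity) (by positivity)]
    nlinarith [mul_nonneg hj hj]
  | succ n ih =>
    have := FF_half (n + 1) j
    rw [pow_succ]
    linarith

theorem FF_sum_bound (n J : ℕ) : |∑ j ∈ Finset.range J, FF (n + 1) j| ≤ (1/2) ^ n := by
  refine (Finset.abs_sum_le_sum_abs _ _).trans ?_
  refine (Finset.sum_le_sum fun j _ => FF_bound n j).trans ?_
  rw [← Finset.mul_sum, Finset.sum_range_sub' (fun j : ℕ => 1 / ((j:ℝ) + 1))]
  have h : (0:ℝ) ≤ 1 / ((J:ℝ) + 1) := by positivity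
  have h2 : (0:ℝ) ≤ (1/2) ^ n := by positivity
  have : (1:ℝ) / (((0:ℕ):ℝ) + 1) - 1 / ((J:ℝ) + 1) ≤ 1 := by
    simp only [Nat.cast_zero, zero_add, div_one]; linarith
  nlinarith

theorem GG_abs (n j : ℕ) : |GG n j| ≤ 3 * (1 / ((j:ℝ) + 1)) := by
  have h : |GG n j| ≤ |FF n j| * 2 := by
    unfold GG FF
    rw [abs_mul, abs_mul, mul_assoc |TT n j|]
    apply mul_le_mul_of_nonneg_left _ (abs_nonneg _)
    rw [abs_of_nonneg (by unfold PP; positivity), abs_of_nonneg (by positivity),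
      div_le_iff₀ (by positivity), ← sub_nonneg]
    unfold PP
    ring_nf
    positivity
  have := FF_le_zero n j
  have := FF_zero_abs j
  linarith

open Filter Topology in
theorem GG_tendsto (n : ℕ) : Tendsto (fun j => GG n j) atTop (𝓝 0) := by
  refine squeeze_zero_norm (fun j => GG_abs n j) ?_
  simpa using tendsto_one_div_add_atTop_nhds_zero_nat (𝕜 := ℝ) |>.const_mul 3

open Filter Topology in
theorem GG_sum : Tendsto (fun N => ∑ n ∈ Finset.range N, GG n 0) atTop
    (𝓝 (3/4 * (Real.pi / (2 * Real.sqrt 2)))) := by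
  rw [← tendsto_add_atTop_iff_nat 1, tendsto_iff_norm_sub_tendsto_zero]
  have hb : ∀ N : ℕ, ‖∑ n ∈ Finset.range (N + 1), GG n 0 - 3/4 * (Real.pi / (2 * Real.sqrt 2))‖
      ≤ (1/2) ^ N := by
    intro N
    have h0 : Tendsto (fun J => ∑ j ∈ Finset.range J, FF 0 j) atTop
        (𝓝 (3/4 * (Real.pi / (2 * Real.sqrt 2)))) := by
      simp only [FF_zero, ← Finset.mul_sum]
      exact leib_aux.const_mul _
    have h1 : Tendsto (fun J => ∑ n ∈ Finset.range (N + 1), GG n J) atTop (𝓝 0) := by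
      simpa using tendsto_finsetSum (Finset.range (N + 1)) (fun n _ => GG_tendsto n)
    have h2 : Tendsto (fun J => ‖∑ n ∈ Finset.range (N + 1), GG n 0
        - ∑ n ∈ Finset.range (N + 1), GG n J - ∑ j ∈ Finset.range J, FF 0 j‖) atTop
        (𝓝 ‖∑ n ∈ Finset.range (N + 1), GG n 0 - 0 - 3/4 * (Real.pi / (2 * Real.sqrt 2))‖) :=
      ((tendsto_const_nhds.sub h1).sub h0).norm
    rw [sub_zero] at h2
    refine le_of_tendsto' h2 fun J => ?_
    rw [← WZ_sum, sub_sub_cancel_left, norm_neg]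
    exact FF_sum_bound N J
  refine squeeze_zero (fun _ => norm_nonneg _) hb ?_
  exact tendsto_pow_atTop_nhds_zero_of_lt_one (by norm_num) (by norm_num)

/-- Hypergeometric part of the summand. -/
noncomputable def AA (k : ℕ) : ℝ :=
  (-1/27 : ℝ) ^ k * (risingFactorial (1/8) k * risingFactorial (1/4) k * risingFactorial (5/8) k * risingFactorial (1) k) /
        (risingFactorial (13/12) k * risingFactorial (11/8) k * risingFactorial (17/12) k * risingFactorial (15/8) k)

theorem AA_succ (k : ℕ) : AA (k + 1) = AA k * ((-1/27) * ((1/8 + k) * (1/4 + k) * (5/8 + k) * (1 + k)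
    / ((13/12 + k) * (11/8 + k) * (17/12 + k) * (15/8 + k)))) := by
  unfold AA
  simp only [rf_succ]
  have := (rf_pos (13/12) (by norm_num) k).ne'
  have := (rf_pos (11/8) (by norm_num) k).ne'
  have := (rf_pos (17/12) (by norm_num) k).ne'
  have := (rf_pos (15/8) (by norm_num) k).ne'
  have h1 : (13/12 + (k:ℝ)) ≠ 0 := by positivity
  have h2 : (11/8 + (k:ℝ)) ≠ 0 := by positivity
  have h3 : (17/12 + (k:ℝ)) ≠ 0 := by positivity
  have h4 : (15/8 + (k:ℝ)) ≠ 0 := by positivity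
  generalize (13/12 + (k:ℝ)) = d1 at *
  generalize (11/8 + (k:ℝ)) = d2 at *
  generalize (17/12 + (k:ℝ)) = d3 at *
  generalize (15/8 + (k:ℝ)) = d4 at *
  generalize (1/8 + (k:ℝ)) = d5 at *
  generalize (1/4 + (k:ℝ)) = d6 at *
  generalize (5/8 + (k:ℝ)) = d7 at *
  generalize (1 + (k:ℝ)) = d8 at *
  rw [pow_succ]
  field_simp

theorem TT_AA (k : ℕ) : TT k 0 = AA k * (16/35 * ((7/4 + 2 * k) * (5/4 + 3 * k))) := by
  induction k with
  | zero => simp [TT, AA, rf_zero]; norm_num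
  | succ k ih =>
    rw [TT_n, AA_succ, ih, ← mul_neg, mul_assoc (AA k), mul_assoc (AA k)]
    congr 1
    push_cast
    simp only [add_zero]
    field_simp
    ring

theorem GG_AA (k : ℕ) : AA k * (448 * (k:ℝ)^3 + 688 * (k:ℝ)^2 + 305 * (k:ℝ) + 44)
    = 105/2 * GG k 0 := by
  unfold GG
  rw [TT_AA]
  have h1 : (7/4 + 2 * (k:ℝ)) ≠ 0 := by positivity
  have h3 : (5/4 + 3 * (k:ℝ)) ≠ 0 := by positivity
  have h4 : (9/4 + 3 * (k:ℝ)) ≠ 0 := by positivity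
  have hp : PP k (0:ℕ) = (448 * (k:ℝ)^3 + 688 * (k:ℝ)^2 + 305 * (k:ℝ) + 44) * (9/4 + 3 * k) / 24 := by
    unfold PP
    push_cast
    ring
  rw [hp]
  simp only [Nat.cast_zero, add_zero]
  generalize (7/4 + 2 * (k:ℝ)) = d1 at *
  generalize (5/4 + 3 * (k:ℝ)) = d2 at *
  generalize (9/4 + 3 * (k:ℝ)) = d3 at *
  field_simp
  ring

theorem AA_summable : Summable fun k : ℕ =>
    AA k * (448 * (k:ℝ)^3 + 688 * (k:ℝ)^2 + 305 * (k:ℝ) + 44) := by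
  refine summable_of_ratio_norm_eventually_le (r := 1/2) (by norm_num)
    (Filter.Eventually.of_forall fun k => ?_)
  rw [AA_succ, mul_assoc (AA k), norm_mul (AA k), norm_mul (AA k), mul_left_comm (1/2 : ℝ)]
  apply mul_le_mul_of_nonneg_left _ (norm_nonneg _)
  rw [neg_div, neg_mul, neg_mul, norm_neg, Real.norm_of_nonneg (by positivity),
    Real.norm_of_nonneg (by positivity), mul_div_assoc', div_mul_eq_mul_div,
    div_le_iff₀ (by positivity), ← sub_nonneg]
  push_cast
  ring_nf
  positivity

theorem stmt_11 :
    315 * Real.pi / (16 * Real.sqrt 2) =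
      ∑' k : ℕ, (-1/27 : ℝ) ^ k * (risingFactorial (1/8) k * risingFactorial (1/4) k * risingFactorial (5/8) k * risingFactorial (1) k) /
        (risingFactorial (13/12) k * risingFactorial (11/8) k * risingFactorial (17/12) k * risingFactorial (15/8) k) * (448 * (k:ℝ)^3 + 688 * (k:ℝ)^2 + 305 * (k:ℝ) + 44) := by
  have h := AA_summable.hasSum.tendsto_sum_nat
  have h2 : Filter.Tendsto (fun N => ∑ k ∈ Finset.range N,
      AA k * (448 * (k:ℝ)^3 + 688 * (k:ℝ)^2 + 305 * (k:ℝ) + 44)) Filter.atTop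
      (nhds (105/2 * (3/4 * (Real.pi / (2 * Real.sqrt 2))))) := by
    simp only [GG_AA, ← Finset.mul_sum]
    exact GG_sum.const_mul _
  have h3 := tendsto_nhds_unique h2 h
  unfold AA at h3
  rw [← h3]
  have hs : Real.sqrt 2 ≠ 0 := by positivity
  field_simp
  norm_num
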